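/- Let A be an abelian category with enough projective objects or enough injective objects, and let D be the standard t-structure on the unbounded derived category D(A). Then gl.dim(A) = gl.dim(D). -/

import Mathlib

open CategoryTheory Limits

namespace TStructurePaper

universe w v u

variable (A : Type u) [Category.{v} A] [Abelian A] [HasDerivedCategory.{w} A]

/-- `X ∈ D(A)_{≤n}`: the cohomology of the complex `X` vanishes in degrees `> n`. -/
def DLE (n : ℤ) (X : DerivedCategory A) : Prop :=
  ∀ i : ℤ, n < i → IsZero ((DerivedCategory.homologyFunctor A i).obj X)

/-- `X ∈ D(A)_{≥n}`: the cohomology of the complex `X` vanishes in degrees `< n`. -/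
def DGE (n : ℤ) (X : DerivedCategory A) : Prop :=
  ∀ i : ℤ, i < n → IsZero ((DerivedCategory.homologyFunctor A i).obj X)

/-- Membership of the subcategory `D_ℕ` of complexes with only finitely many nonzero
cohomology objects. -/
def InDb (X : DerivedCategory A) : Prop :=
  {i : ℤ | ¬ IsZero ((DerivedCategory.homologyFunctor A i).obj X)}.Finite

/-- The global dimension of the standard t-structure `D` on `D(A)`: the smallest `d` such
that `Hom(D_{≥0}, D_{≤-(d+1)}) = 0`. -/
noncomputable def glDimD : ℕ∞ :=
  sInf {e : ℕ∞ | ∃ d : ℕ, e = d ∧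
    ∀ (X Y : DerivedCategory A), DGE A 0 X → DLE A (-(d + 1)) Y → ∀ f : X ⟶ Y, f = 0}

/-- The global dimension of the restricted bounded t-structure `D^b` on the full
subcategory `D_ℕ` (whose Hom-groups are those of `D(A)`). -/
noncomputable def glDimDb : ℕ∞ :=
  sInf {e : ℕ∞ | ∃ d : ℕ, e = d ∧
    ∀ (X Y : DerivedCategory A), InDb A X → InDb A Y →
      DGE A 0 X → DLE A (-(d + 1)) Y → ∀ f : X ⟶ Y, f = 0}

/-- The global dimension of the abelian category `A`: the supremum of the set of `d ≥ 0`
such that `Ext^d_A(M, N) ≠ 0` for some objects `M`, `N`. -/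
noncomputable def glDimAb [HasExt.{w} A] : ℕ∞ :=
  sSup {e : ℕ∞ | ∃ d : ℕ, e = d ∧ ∃ (M N : A) (α : Abelian.Ext.{w} M N d), α ≠ 0}

section

variable {B : Type u} [Category.{v} B] [Abelian B]

/-- The stupid truncation of a cochain complex in degrees `≤ n`, as a quotient. -/
lemma exists_stupidTruncLE (K : CochainComplex B ℤ) (n : ℤ) :
    ∃ (E : CochainComplex B ℤ) (p : K ⟶ E),
      E.IsStrictlyLE n ∧ ∀ i ≤ n, IsIso (p.f i) := by
  let e := ComplexShape.embeddingUpIntLE n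
  refine ⟨(K.restriction e).extend e,
    e.liftExtend (𝟙 _) (fun j hj ↦ (hj.false_of_isTruncLE).elim), inferInstance, ?_⟩
  intro i hi
  obtain ⟨k, hk⟩ := Int.le.dest hi
  exact (e.isIso_liftExtend_f_iff _ _ (i := k) (show n - (k : ℤ) = i by lia)).2 inferInstance

/-- A morphism to a complex in degrees `≤ n` factors through any quotient that
is an isomorphism in degrees `≤ n`. -/
lemma exists_comp_eq_of_isStrictlyLE {K E L : CochainComplex B ℤ} (n : ℤ) (p : K ⟶ E)
    [E.IsStrictlyLE n] [L.IsStrictlyLE n] (hp : ∀ i ≤ n, IsIso (p.f i)) (g : K ⟶ L) :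
    ∃ q : E ⟶ L, p ≫ q = g := by
  let q (i : ℤ) : E.X i ⟶ L.X i :=
    if hi : i ≤ n then (have := hp i hi; inv (p.f i)) ≫ g.f i else 0
  have hq (i : ℤ) : p.f i ≫ q i = g.f i := by
    by_cases hi : i ≤ n
    · have := hp i hi
      simp [q, hi]
    · exact (L.isZero_of_isStrictlyLE n i (by lia)).eq_of_tgt _ _
  refine ⟨{ f := q, comm' := fun i j _ ↦ ?_ }, by ext i; exact hq i⟩
  by_cases hi : i ≤ n
  · have := hp i hi
    rw [← cancel_epi (p.f i), reassoc_of% (hq i), p.comm_assoc, hq j, g.comm]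
  · exact (E.isZero_of_isStrictlyLE n i (by lia)).eq_of_src _ _

lemma isGE_of_isIso_f {K E : CochainComplex B ℤ} (n : ℤ) (p : K ⟶ E)
    (hp : ∀ i ≤ n, IsIso (p.f i)) [K.IsGE n] : E.IsGE n := by
  rw [CochainComplex.isGE_iff]
  intro i hi
  have hK := K.exactAt_of_isGE n i hi
  have := hp (i - 1) (by lia)
  have := hp i (by lia)
  have := hp (i + 1) (by lia)
  rw [HomologicalComplex.exactAt_iff' _ (i - 1) i (i + 1) (by simp) (by simp)] at hK ⊢
  let e (j : ℤ) (_ : IsIso (p.f j)) : K.X j ≅ E.X j := asIso (p.f j)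
  exact (ShortComplex.exact_iff_of_iso (ShortComplex.isoMk (e (i - 1) inferInstance)
    (e i inferInstance) (e (i + 1) inferInstance) (p.comm _ _) (p.comm _ _))).1 hK

variable (B) in
lemma glDimAb_le_coe_iff [HasExt.{w} B] (d : ℕ) :
    glDimAb B ≤ d ↔
      ∀ e : ℕ, d < e → ∀ M N : B, Subsingleton (Abelian.Ext.{w} M N e) := by
  rw [glDimAb, sSup_le_iff]
  constructor
  · intro h e he M N
    refine subsingleton_of_forall_eq 0 fun α ↦ ?_
    by_contra hα
    exact absurd (h e ⟨e, rfl, M, N, α, hα⟩) (by simpa using he)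
  · rintro h _ ⟨e, rfl, M, N, α, hα⟩
    by_contra! he
    exact hα ((h e (by simpa using he) M N).elim _ _)

end

variable {A}

/-- In the derived category, a morphism from an object `≥ n` to an object `≤ n` factors
through an object that is concentrated in degree `n`. -/
lemma exists_fac_of_isGE_of_isLE {X Y : DerivedCategory A} (n : ℤ)
    [X.IsGE n] [Y.IsLE n] (f : X ⟶ Y) :
    ∃ (M : A) (a : X ⟶ (DerivedCategory.singleFunctor A n).obj M)
      (b : (DerivedCategory.singleFunctor A n).obj M ⟶ Y), a ≫ b = f := by
  open DerivedCategory in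
  obtain ⟨K, _, ⟨eX⟩⟩ := X.exists_iso_Q_obj_of_isGE n
  obtain ⟨L, _, ⟨eY⟩⟩ := Y.exists_iso_Q_obj_of_isLE n
  obtain ⟨K', s, _, g, hg⟩ := right_fac (eX.inv ≫ f ≫ eY.hom)
  have : K'.IsGE n := by
    rw [← isGE_Q_obj_iff]
    exact TStructure.t.isGE_of_iso (asIso (Q.map s)).symm n
  obtain ⟨E, p, _, hp⟩ := exists_stupidTruncLE K' n
  obtain ⟨q, rfl⟩ := exists_comp_eq_of_isStrictlyLE n p hp g
  have := isGE_of_isIso_f n p hp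
  obtain ⟨M, ⟨e⟩⟩ := (Q.obj E).exists_iso_singleFunctor_obj_of_isGE_of_isLE n
  refine ⟨M, eX.hom ≫ inv (Q.map s) ≫ Q.map p ≫ e.hom, e.inv ≫ Q.map q ≫ eY.inv, ?_⟩
  rw [Q.map_comp] at hg
  simp [← reassoc_of% hg]

/-- If `Ext^d` vanishes for some `d`, there are no nonzero morphisms
from objects `≥ 0` to objects `≤ -d`. -/
lemma eq_zero_of_subsingleton_ext [HasExt.{w} A] (d : ℕ)
    (hd : ∀ M N : A, Subsingleton (Abelian.Ext.{w} M N d))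
    {X Y : DerivedCategory A} [X.IsGE 0] [Y.IsLE (-d)] (f : X ⟶ Y) : f = 0 := by
  have : Y.IsLE 0 := DerivedCategory.TStructure.t.isLE_of_le Y (-d) 0 (by lia)
  obtain ⟨M, a, b, rfl⟩ := exists_fac_of_isGE_of_isLE 0 f
  have : ((DerivedCategory.singleFunctor A 0).obj M).IsGE (-d) :=
    DerivedCategory.TStructure.t.isGE_of_ge _ (-d) 0 (by lia)
  obtain ⟨N, b, c, rfl⟩ := exists_fac_of_isGE_of_isLE (-d) b
  let e := ((DerivedCategory.singleFunctors A).shiftIso (d : ℤ) (-d) 0 (by simp)).app N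
  have hb : b ≫ e.inv = 0 :=
    (Abelian.Ext.homEquiv (X := M) (Y := N) (n := d)).symm.injective ((hd M N).elim _ _)
  have hb' : b = 0 := by rw [← cancel_mono e.inv, hb, zero_comp]
  simp [hb']

variable (A)

/-- If the abelian category `A` has enough projective objects or enough
injective objects, then `gl.dim(A) = gl.dim(D)` for the standard t-structure `D` on `D(A)`. -/
theorem statement9 [HasExt.{w} A]
    (h : EnoughProjectives A ∨ EnoughInjectives A) :
    glDimAb A = glDimD A := by
  refine le_antisymm (le_sInf ?_) ?_
  · rintro _ ⟨d, rfl, hd⟩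
    rw [glDimAb_le_coe_iff]
    intro e he M N
    have (α : ShiftedHom ((DerivedCategory.singleFunctor A 0).obj M)
        ((DerivedCategory.singleFunctor A 0).obj N) (e : ℤ)) : α = 0 := by
      have h₁ := DerivedCategory.TStructure.t.isLE_shift
        ((DerivedCategory.singleFunctor A 0).obj N) 0 e (-e) (by simp)
      have h₂ := DerivedCategory.TStructure.t.isLE_of_le
        (((DerivedCategory.singleFunctor A 0).obj N)⟦(e : ℤ)⟧) (-e) (-(d + 1)) (by lia)
      exact hd _ _ ((DerivedCategory.isGE_iff _ _).1 inferInstance)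
        ((DerivedCategory.isLE_iff _ _).1 h₂) α
    exact ⟨fun α β ↦ Abelian.Ext.homEquiv.injective ((this _).trans (this _).symm)⟩
  · by_cases htop : glDimAb A = ⊤
    · simp [htop]
    obtain ⟨d, hd⟩ := ENat.ne_top_iff_exists.1 htop
    rw [← hd]
    refine sInf_le ⟨d, rfl, fun X Y hX hY f ↦ ?_⟩
    have : X.IsGE 0 := (DerivedCategory.isGE_iff _ _).2 hX
    have : Y.IsLE (-(d + 1 : ℕ)) := by
      push_cast
      exact (DerivedCategory.isLE_iff _ _).2 hY
    exact eq_zero_of_subsingleton_ext (d + 1)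
      ((glDimAb_le_coe_iff A d).1 hd.ge (d + 1) (by simp)) f

end TStructurePaper
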